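/- Let e ≥ 42 and, in four variables, let F = (14,14,e-28,0), G_1 = (e-12,4,4,4), G_2 = (4,e-12,4,4), G_3 = (4,4,e-12,4), G_4 = (4,4,4,e-12) be exponent vectors of degree-e monomials. For every k with 1 ≤ k ≤ 4, let h(i) be the number of monomials of degree i dividing at least one of F, G_1, …, G_k. Then h(e-14) = 120 + 125k, h(e-13) = 105 + 125k, h(e-12) = 91 + 125k, and h(e-13)^2 < h(e-14)·h(e-12); in particular h is not log-concave. (This gives infinite families of non-log-concave pure O-sequences of codimension 4 and each type t = 2, 3, 4, 5.) -/

import Mathlib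

/-- `divCountSet M i` is the number of monomials of degree `i` (in `r`
variables) dividing at least one monomial whose exponent vector lies in `M`:
the `i`-th entry of the pure `O`-sequence generated by `M`. -/
noncomputable def divCountSet {r : ℕ} (M : Set (Fin r → ℕ)) (i : ℕ) : ℕ :=
  {b : Fin r → ℕ | (∑ j, b j = i) ∧ ∃ a ∈ M, ∀ j, b j ≤ a j}.ncard

/-!
A monomial `F` of degree `e` has as many divisors of degree `e - d` as of degree `d`, and if `d` is
at most each of its three nonzero exponents, the latter are all the monomials of degree `d` in three
variables. For `d = 14, 13, 12` this gives `120, 105, 91`. In these degrees each `G_j` has `5 ^ 3`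
divisors, since the three exponents bounded by `4` can be chosen freely and determine the large one.
The gcd of any two generators has degree less than `e - 14`, so these contributions add up. The
triple `120, 105, 91` is log-concave but strictly convex, and adding a large constant to a convex
triple destroys log-concavity: here `(105 + x) ^ 2 < (120 + x) * (91 + x)` just says `105 < x`.
-/

open Finset Function

theorem card_piAntidiag_nat_eq_multichoose {ι : Type*} [DecidableEq ι] (s : Finset ι) (d : ℕ) :
    #(s.piAntidiag d) = (#s).multichoose d := by
  rw [← card_finsuppAntidiag_nat_eq_multichoose, finsuppAntidiag, card_map, card_attach]

theorem multichoose_three (d : ℕ) : Nat.multichoose 3 d = (d + 2).choose 2 := by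
  rw [Nat.multichoose_eq, show 3 + d - 1 = d + 2 by omega, Nat.choose_symm_add]

theorem sum_update_eq_add_sum_erase {ι α : Type*} [Fintype ι] [DecidableEq ι] [AddCommMonoid α]
    (b : ι → α) (j : ι) (x : α) : ∑ m, update b j x m = x + ∑ m ∈ univ.erase j, b m := by
  rw [sum_update_of_mem (mem_univ j), sdiff_singleton_eq_erase]

section Divisors

variable {ι : Type*} [Fintype ι] [DecidableEq ι] {a b : ι → ℕ} {d i : ℕ}

/-- The exponent vectors of the degree `i` divisors of the monomial with exponent vector `a`. -/
def divisorsOfDegree (a : ι → ℕ) (i : ℕ) : Finset (ι → ℕ) :=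
  {b ∈ Iic a | ∑ j, b j = i}

theorem mem_divisorsOfDegree : b ∈ divisorsOfDegree a i ↔ b ≤ a ∧ ∑ j, b j = i := by
  simp [divisorsOfDegree]

theorem sub_mem_divisorsOfDegree (h : i + d = ∑ j, a j) (hb : b ∈ divisorsOfDegree a i) :
    a - b ∈ divisorsOfDegree a d := by
  obtain ⟨hba, rfl⟩ := mem_divisorsOfDegree.1 hb
  refine mem_divisorsOfDegree.2 ⟨tsub_le_self, ?_⟩
  simp only [Pi.sub_apply]
  rw [sum_tsub_distrib _ fun j _ => hba j, ← h, Nat.add_sub_cancel_left]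

theorem card_divisorsOfDegree_eq_of_add_eq (h : i + d = ∑ j, a j) :
    #(divisorsOfDegree a i) = #(divisorsOfDegree a d) :=
  card_nbij' (a - ·) (a - ·) (fun _ => sub_mem_divisorsOfDegree h)
    (fun _ => sub_mem_divisorsOfDegree (by rwa [add_comm]))
    (fun _ hb => tsub_tsub_cancel_of_le (mem_divisorsOfDegree.1 hb).1)
    (fun _ hb => tsub_tsub_cancel_of_le (mem_divisorsOfDegree.1 hb).1)

theorem divisorsOfDegree_eq_piAntidiag {s : Finset ι} (hs : ∀ j ∉ s, a j = 0)
    (hd : ∀ j ∈ s, d ≤ a j) : divisorsOfDegree a d = s.piAntidiag d := by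
  ext b
  rw [mem_divisorsOfDegree, mem_piAntidiag]
  constructor
  · rintro ⟨hba, hb⟩
    have hsupp : ∀ j ∉ s, b j = 0 := fun j hj => Nat.eq_zero_of_le_zero (hs j hj ▸ hba j)
    exact ⟨by rw [← hb, sum_subset (subset_univ s) fun j _ => hsupp j],
      fun j => not_imp_comm.1 (hsupp j)⟩
  · rintro ⟨hb, hsupp⟩
    refine ⟨fun j => ?_, by
      rw [← hb, sum_subset (subset_univ s) fun j _ => not_imp_comm.1 (hsupp j)]⟩
    by_cases hj : j ∈ s
    · exact (single_le_sum_of_canonicallyOrdered hj).trans (hb.trans_le (hd j hj))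
    · exact (not_imp_comm.1 (hsupp j) hj).trans_le (Nat.zero_le _)

theorem card_divisorsOfDegree_of_codegree_le {s : Finset ι} (h : i + d = ∑ j, a j)
    (hs : ∀ j ∉ s, a j = 0) (hd : ∀ j ∈ s, d ≤ a j) :
    #(divisorsOfDegree a i) = (#s).multichoose d := by
  rw [card_divisorsOfDegree_eq_of_add_eq h, divisorsOfDegree_eq_piAntidiag hs hd,
    card_piAntidiag_nat_eq_multichoose]

theorem card_Iic_update_zero (a : ι → ℕ) (j : ι) :
    #(Iic (update a j 0)) = ∏ m ∈ univ.erase j, (a m + 1) := by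
  rw [Pi.card_Iic, ← mul_prod_erase univ _ (mem_univ j)]
  simp only [Nat.card_Iic, update_self, zero_add, one_mul]
  exact prod_congr rfl fun m hm => by rw [update_of_ne (ne_of_mem_erase hm)]

theorem card_divisorsOfDegree_of_sum_erase_le (j : ι) (h : ∑ m ∈ univ.erase j, a m ≤ i)
    (hj : i ≤ a j) : #(divisorsOfDegree a i) = ∏ m ∈ univ.erase j, (a m + 1) := by
  rw [← card_Iic_update_zero]
  -- A divisor is determined by its exponents off `j`, which are arbitrary.
  refine card_nbij' (update · j 0) (fun t => update t j (i - ∑ m, t m)) ?_ ?_ ?_ ?_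
  · intro b hb
    exact mem_Iic.2 (update_le_update_iff.2
      ⟨le_rfl, fun m _ => (mem_divisorsOfDegree.1 hb).1 m⟩)
  · intro t ht
    obtain ⟨htj, hta⟩ := le_update_iff.1 (mem_Iic.1 ht)
    have hsum : ∑ m, t m = ∑ m ∈ univ.erase j, t m := by
      rw [← add_sum_erase univ t (mem_univ j), Nat.eq_zero_of_le_zero htj, zero_add]
    have hle : ∑ m ∈ univ.erase j, t m ≤ i :=
      (sum_le_sum fun m hm => hta m (ne_of_mem_erase hm)).trans h
    refine mem_divisorsOfDegree.2 ⟨update_le_iff.2 ⟨(Nat.sub_le _ _).trans hj, hta⟩, ?_⟩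
    rw [sum_update_eq_add_sum_erase, hsum, Nat.sub_add_cancel hle]
  · intro b hb
    have hbj : i - ∑ m, update b j 0 m = b j := by
      rw [sum_update_eq_add_sum_erase, zero_add, ← (mem_divisorsOfDegree.1 hb).2,
        ← add_sum_erase univ b (mem_univ j), Nat.add_sub_cancel_right]
    simp only [hbj, update_idem, update_eq_self]
  · intro t ht
    have htj : t j = 0 := Nat.eq_zero_of_le_zero (le_update_iff.1 (mem_Iic.1 ht)).1
    simp only [update_idem, ← htj, update_eq_self]

theorem disjoint_divisorsOfDegree (h : ∑ j, (a ⊓ b) j < i) :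
    Disjoint (divisorsOfDegree a i) (divisorsOfDegree b i) := by
  -- A common divisor divides the gcd, whose exponent vector is `a ⊓ b`.
  refine disjoint_left.2 fun c ha hb => ?_
  obtain ⟨hca, hc⟩ := mem_divisorsOfDegree.1 ha
  obtain ⟨hcb, -⟩ := mem_divisorsOfDegree.1 hb
  have hle : ∑ j, c j ≤ ∑ j, (a ⊓ b) j := sum_le_sum fun j _ => le_inf hca hcb j
  omega

end Divisors

section Spike

variable {ι : Type*} [DecidableEq ι] {c N : ℕ}

/-- The exponent vector with entry `N` at the variable `j` and `c` at all other variables; the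
monomial `G_j` of the theorem is `spike 4 (e - 12) j`. -/
def spike (c N : ℕ) (j : ι) : ι → ℕ :=
  update (fun _ => c) j N

theorem spike_inf_spike (hc : c ≤ N) {j l : ι} (hjl : j ≠ l) :
    spike c N j ⊓ spike c N l = fun _ => c := by
  ext m
  simp only [spike, Pi.inf_apply, update_apply]
  split_ifs <;> simp_all

theorem card_divisorsOfDegree_spike [Fintype ι] {i : ℕ} (j : ι)
    (hi : (Fintype.card ι - 1) * c ≤ i) (hN : i ≤ N) :
    #(divisorsOfDegree (spike c N j) i) = (c + 1) ^ (Fintype.card ι - 1) := by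
  have hoff : ∀ m ∈ univ.erase j, spike c N j m = c := fun m hm =>
    update_of_ne (ne_of_mem_erase hm) _ _
  have hcard : #(univ.erase j) = Fintype.card ι - 1 := card_erase_of_mem (mem_univ j)
  rw [card_divisorsOfDegree_of_sum_erase_le j
    (by rwa [sum_congr rfl hoff, sum_const, hcard]) (by rwa [spike, update_self]),
    prod_congr rfl fun m hm => by rw [hoff m hm], prod_const, hcard]

end Spike

section PureOSequence

variable {r i : ℕ}

theorem divCountSet_coe (M : Finset (Fin r → ℕ)) (i : ℕ) :
    divCountSet (M : Set (Fin r → ℕ)) i = #(M.biUnion (divisorsOfDegree · i)) := by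
  rw [divCountSet, ← Set.ncard_coe_finset]
  congr 1
  ext b
  simp only [Set.mem_ofPred_eq, mem_coe, mem_biUnion, mem_divisorsOfDegree, Pi.le_def]
  tauto

theorem divCountSet_insert {a : Fin r → ℕ} {M : Finset (Fin r → ℕ)}
    (h : ∀ b ∈ M, ∑ j, (a ⊓ b) j < i) :
    divCountSet (insert a M : Set (Fin r → ℕ)) i =
      #(divisorsOfDegree a i) + divCountSet (M : Set (Fin r → ℕ)) i := by
  rw [← coe_insert, divCountSet_coe, divCountSet_coe, biUnion_insert, card_union_of_disjoint]
  exact (disjoint_biUnion_right _ _ _).2 fun b hb => disjoint_divisorsOfDegree (h b hb)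

theorem divCountSet_image_eq_sum {κ : Type*} {s : Finset κ} {a : κ → Fin r → ℕ}
    (h : (s : Set κ).Pairwise fun x y => ∑ j, (a x ⊓ a y) j < i) :
    divCountSet (a '' s) i = ∑ x ∈ s, #(divisorsOfDegree (a x) i) := by
  classical
  rw [← coe_image, divCountSet_coe, image_biUnion, card_biUnion]
  exact fun x hx y hy hxy => disjoint_divisorsOfDegree (h hx hy hxy)

theorem divCountSet_image_spike (s : Finset (Fin r)) {c N : ℕ} (hi : r * c < i) (hN : i ≤ N) :
    divCountSet (spike c N '' (s : Set (Fin r))) i = #s * (c + 1) ^ (r - 1) := by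
  rw [divCountSet_image_eq_sum]
  · have hcard (j : Fin r) : #(divisorsOfDegree (spike c N j) i) = (c + 1) ^ (r - 1) := by
      have hi' : (r - 1) * c ≤ i := (Nat.mul_le_mul_right c (Nat.sub_le r 1)).trans hi.le
      simpa using card_divisorsOfDegree_spike j (by simpa using hi') hN
    simp only [hcard, sum_const, smul_eq_mul]
  · intro j _ l _ hjl
    have hc : c ≤ N := (Nat.le_mul_of_pos_left c j.pos).trans (hi.le.trans hN)
    simpa only [spike_inf_spike hc hjl, sum_const, card_univ, Fintype.card_fin, smul_eq_mul]
      using hi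

theorem divCountSet_insert_image_spike {a : Fin r → ℕ} {s t : Finset (Fin r)} {c d N : ℕ}
    (hdeg : i + d = ∑ j, a j) (hs : ∀ j ∉ s, a j = 0) (hd : ∀ j ∈ s, d ≤ a j)
    (ht : ∀ j ∈ t, ∑ m, (a ⊓ spike c N j) m < i) (hi : r * c < i) (hN : i ≤ N) :
    divCountSet (insert a (spike c N '' t)) i =
      (#s).multichoose d + #t * (c + 1) ^ (r - 1) := by
  rw [← coe_image, divCountSet_insert (by simpa only [forall_mem_image] using ht), coe_image,
    card_divisorsOfDegree_of_codegree_le hdeg hs hd, divCountSet_image_spike t hi hN]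

end PureOSequence

theorem sum_inf_spike_lt {e i : ℕ} (he : 42 ≤ e) (hi : e ≤ i + 14) (j : Fin 4) :
    ∑ m, (![14, 14, e - 28, 0] ⊓ spike 4 (e - 12) j) m < i := by
  rw [Fin.sum_univ_four]
  fin_cases j <;> simp [spike] <;> omega

theorem divCountSet_of_codegree {e d : ℕ} (he : 42 ≤ e) (hd : 12 ≤ d) (hd' : d ≤ 14)
    (t : Finset (Fin 4)) :
    divCountSet (insert ![14, 14, e - 28, 0] (spike 4 (e - 12) '' (t : Set (Fin 4)))) (e - d) =
      (d + 2).choose 2 + #t * 125 := by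
  rw [← multichoose_three]
  have hdeg : e - d + d = ∑ j, ![14, 14, e - 28, 0] j := by
    rw [Fin.sum_univ_four]
    change e - d + d = 14 + 14 + (e - 28) + 0
    omega
  have hsupp : ∀ j ∉ ({0, 1, 2} : Finset (Fin 4)), ![14, 14, e - 28, 0] j = 0 := by
    simp [Fin.forall_fin_succ]
  have hle : ∀ j ∈ ({0, 1, 2} : Finset (Fin 4)), d ≤ ![14, 14, e - 28, 0] j := by
    simp only [mem_insert, mem_singleton, forall_eq_or_imp, forall_eq]
    exact ⟨hd', hd', show d ≤ e - 28 by omega⟩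
  exact divCountSet_insert_image_spike hdeg hsupp hle
    (fun j _ => sum_inf_spike_lt he (by omega) j) (by omega) (by omega)

/-- **Non-log-concave pure `O`-sequences of codimension 4 and types 2–5.**
For `e ≥ 42`, let `F = x^14 y^14 z^(e-28)` and let `G₁, G₂, G₃, G₄` be the
monomials obtained by placing the exponent `e - 12` in each of the four
variables and `4` in the remaining three. For each `1 ≤ k ≤ 4`, the pure
`O`-sequence `h` generated by `F, G₁, …, G_k` satisfies
`h (e-14) = 120 + 125k`, `h (e-13) = 105 + 125k`, `h (e-12) = 91 + 125k`,
and `h (e-13)^2 < h (e-14) * h (e-12)`; in particular `h` is not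
log-concave. -/
theorem stmt_15 (e : ℕ) (he : 42 ≤ e)
    (F : Fin 4 → ℕ) (hF : F = ![14, 14, e - 28, 0])
    (G : Fin 4 → Fin 4 → ℕ)
    (hG : G = ![![e - 12, 4, 4, 4], ![4, e - 12, 4, 4], ![4, 4, e - 12, 4],
      ![4, 4, 4, e - 12]])
    (k : ℕ) (hk1 : 1 ≤ k) (hk2 : k ≤ 4)
    (M : Set (Fin 4 → ℕ)) (hM : M = {F} ∪ {G j | (j : Fin 4) (_ : (j : ℕ) < k)}) :
    divCountSet M (e - 14) = 120 + 125 * k ∧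
      divCountSet M (e - 13) = 105 + 125 * k ∧
      divCountSet M (e - 12) = 91 + 125 * k ∧
      (divCountSet M (e - 13)) ^ 2 <
        divCountSet M (e - 14) * divCountSet M (e - 12) := by
  have hspike : G = spike 4 (e - 12) := by
    subst hG
    ext j m
    fin_cases j <;> fin_cases m <;> rfl
  have hgen : M = insert ![14, 14, e - 28, 0]
      (spike 4 (e - 12) '' ({j : Fin 4 | (j : ℕ) < k} : Finset (Fin 4))) := by
    subst hM hF hspike
    ext b
    simp
  have hcount (d : ℕ) (hd : 12 ≤ d) (hd' : d ≤ 14) :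
      divCountSet M (e - d) = (d + 2).choose 2 + 125 * k := by
    rw [hgen, divCountSet_of_codegree he hd hd', Fin.card_filter_val_lt, min_eq_right hk2, mul_comm]
  have h14 : divCountSet M (e - 14) = 120 + 125 * k := hcount 14 (by norm_num) le_rfl
  have h13 : divCountSet M (e - 13) = 105 + 125 * k := hcount 13 (by norm_num) (by norm_num)
  have h12 : divCountSet M (e - 12) = 91 + 125 * k := hcount 12 le_rfl (by norm_num)
  refine ⟨h14, h13, h12, ?_⟩
  rw [h14, h13, h12]
  linarith
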